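/- For every integer n ≥ 2, the following identity of polynomials holds in ℤ[s,t]: {2n}!·{n-1}!·{n-2}!·{n+1}! = {n+1}·{2n-1}!·{n}!·{n-2}!·{n+1}! + t·{n+1}·{2n-1}!·{n}!·{n}!·{n-1}!. (Equivalently, after dividing by the Lucas factorials this states the lucasnomial identity (1/{n+1})·{2n choose n} = {2n-1 choose n-1} + t·{2n-1 choose n-2}.) -/

import Mathlib

/-!
Everything rests on the factorization `{2n} = {n}·({n+1} + t·{n-1})`, a special case of the
addition formula `{m+k+1} = {m+1}·{k+1} + t·{m}·{k}` (`lucas_add`). After writing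
`{2n}! = {2n}·{2n-1}!` and expressing every smaller factorial through `{n-2}!`, the two summands
`{n+1}` and `t·{n-1}` of the second factor give the two terms of the right-hand side.
-/

open MvPolynomial

/-- The Lucas polynomials in ℤ[s,t], where `X 0` is `s` and `X 1` is `t`:
`{0} = 0`, `{1} = 1`, `{n} = s·{n-1} + t·{n-2}`. -/
noncomputable def lucas : ℕ → MvPolynomial (Fin 2) ℤ
  | 0 => 0
  | 1 => 1
  | n + 2 => X 0 * lucas (n + 1) + X 1 * lucas n

/-- The Lucas factorial: `{0}! = 1`, `{n}! = {n}·{n-1}!`. -/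
noncomputable def lucasFactorial : ℕ → MvPolynomial (Fin 2) ℤ
  | 0 => 1
  | n + 1 => lucas (n + 1) * lucasFactorial n

/-- Addition formula, by induction on `m` for all `k` simultaneously. -/
theorem lucas_add (m k : ℕ) :
    lucas (m + k + 1) = lucas (m + 1) * lucas (k + 1) + X 1 * lucas m * lucas k := by
  induction m generalizing k with
  | zero => simp [lucas]
  | succ m ih =>
    have h := ih (k + 1)
    rw [show m + 1 + k + 1 = m + (k + 1) + 1 by ring, h]
    simp only [lucas]
    ring

theorem lucasCatalan_identity (n : ℕ) (hn : 2 ≤ n) :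
    lucasFactorial (2 * n) * lucasFactorial (n - 1) * lucasFactorial (n - 2) *
        lucasFactorial (n + 1) =
      lucas (n + 1) * lucasFactorial (2 * n - 1) * lucasFactorial n *
          lucasFactorial (n - 2) * lucasFactorial (n + 1) +
        X 1 * lucas (n + 1) * lucasFactorial (2 * n - 1) * lucasFactorial n *
          lucasFactorial n * lucasFactorial (n - 1) := by
  obtain ⟨k, rfl⟩ := Nat.exists_eq_add_of_le' hn
  rw [show 2 * (k + 2) = 2 * k + 3 + 1 by ring, show 2 * k + 3 + 1 - 1 = 2 * k + 3 by omega,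
    show k + 2 - 1 = k + 1 by omega, show k + 2 - 2 = k by omega]
  have h2 : lucas (2 * k + 3 + 1) =
      lucas (k + 2) * (lucas (k + 2 + 1) + X 1 * lucas (k + 1)) := by
    rw [show 2 * k + 3 + 1 = (k + 2) + (k + 1) + 1 by ring, lucas_add]
    ring
  have f0 : lucasFactorial (2 * k + 3 + 1) =
      lucas (2 * k + 3 + 1) * lucasFactorial (2 * k + 3) := rfl
  have f1 : lucasFactorial (k + 1) = lucas (k + 1) * lucasFactorial k := rfl
  have f2 : lucasFactorial (k + 2) = lucas (k + 2) * lucasFactorial (k + 1) := rfl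
  have f3 : lucasFactorial (k + 2 + 1) = lucas (k + 2 + 1) * lucasFactorial (k + 2) := rfl
  rw [f0, f3, f2, f1, h2]
  ring
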